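/- Let δ > 0 and assume the L² estimate: there is C_E > 0 such that ∫_{B(0,1/t)} |𝐄(ξ,y)|² dw(ξ) ≤ C_E / w(B(y,t)) for all t > 0 and y ∈ ℝ^N. Then there is a constant C₁ > 0, depending only on δ, N, R, k, such that for all f ∈ L¹(dw), all g ∈ L¹(dw) with |𝓕g(ξ)| ≤ (1+‖ξ‖)^{−𝐍−δ} for all ξ, and all x, y ∈ ℝ^N: |(f∗g)(x,y)| ≤ C₁ w(B(x,1))^{−1/2} w(B(y,1))^{−1/2} ‖f‖_{L¹(dw)}, where (f∗g)(x,y) := c_k^{-1} ∫ 𝐄(ξ,x) conj(𝐄(ξ,y)) 𝓕f(ξ) 𝓕g(ξ) dw(ξ). -/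

import Mathlib

open MeasureTheory Metric Complex
open scoped BigOperators ENNReal RealInnerProductSpace

noncomputable section

/-- `ℝ^N` with the Euclidean inner product. -/
abbrev V (N : ℕ) := EuclideanSpace ℝ (Fin N)

variable {N : ℕ}

/-- The reflection `σ_α(x) = x − (2⟨x,α⟩/‖α‖²) α`. -/
def sigma' (α x : V N) : V N := x - (2 * ⟪x, α⟫ / ‖α‖ ^ 2) • α

/-- `R` is a normalized root system: `0 ∉ R`, `‖α‖² = 2`, `σ_α(R) = R`,
and `R ∩ ℝα = {±α}` for every `α ∈ R`. -/
structure IsNRS {N : ℕ} (R : Finset (V N)) : Prop where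
  ne_zero : (0 : V N) ∉ R
  normSq : ∀ α ∈ R, ‖α‖ ^ 2 = 2
  reflMem : ∀ α ∈ R, ∀ β ∈ R, sigma' α β ∈ R
  two : ∀ α ∈ R, ∀ β ∈ R, (∃ c : ℝ, β = c • α) → β = α ∨ β = -α

/-- The density `w(x) = ∏_{α ∈ R} |⟨x,α⟩|^{k(α)}`. -/
def wfun (R : Finset (V N)) (k : V N → ℝ) (x : V N) : ℝ := ∏ α ∈ R, |⟪x, α⟫| ^ (k α)

/-- The measure `dw = w(x) dx`. -/
def dw (R : Finset (V N)) (k : V N → ℝ) : Measure (V N) :=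
  volume.withDensity fun x => ENNReal.ofReal (wfun R k x)

/-- `w(B(x,r))`, the `dw`-measure of the closed ball. -/
def wB (R : Finset (V N)) (k : V N → ℝ) (x : V N) (r : ℝ) : ℝ := (dw R k (closedBall x r)).toReal

/-- The Mehta–Macdonald constant `c_k = ∫ e^{−‖x‖²/2} dw(x)`. -/
def ck (R : Finset (V N)) (k : V N → ℝ) : ℝ := ∫ x, Real.exp (-‖x‖ ^ 2 / 2) ∂(dw R k)

/-- The homogeneous dimension `𝐍 = N + Σ_{α∈R} k(α)`. -/
def NN (R : Finset (V N)) (k : V N → ℝ) : ℝ := N + ∑ α ∈ R, k α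

/-- The reflection group `G` generated by the `σ_α`, `α ∈ R`
(realized as the set of all finite products of such reflections). -/
def Gset (R : Finset (V N)) : Set (V N → V N) :=
  {g | ∃ l : List (V N), (∀ α ∈ l, α ∈ R) ∧ g = l.foldr (fun α h => sigma' α ∘ h) id}

/-- The distance of orbits, `d(x,y) = min_{σ ∈ G} ‖x − σ(y)‖`. -/
def dG (R : Finset (V N)) (x y : V N) : ℝ := sInf {r | ∃ g ∈ Gset R, r = ‖x - g y‖}

/-- The partial derivative `∂_j`. -/
def pd (j : Fin N) (f : V N → ℂ) : V N → ℂ := fun x => fderiv ℝ f x (EuclideanSpace.single j 1)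

/-- The multi-index partial derivative `∂^β = ∂_1^{β_1} ∘ ⋯ ∘ ∂_N^{β_N}`. -/
def pdM (β : Fin N → ℕ) (f : V N → ℂ) : V N → ℂ :=
  (Finset.univ : Finset (Fin N)).toList.foldr (fun j g => (pd j)^[β j] g) f

/-- The Dunkl operator `T_j`. -/
def TDop (R : Finset (V N)) (k : V N → ℝ) (j : Fin N) (f : V N → ℂ) : V N → ℂ := fun x =>
  pd j f x + ∑ α ∈ R, (((k α / 2) * α j : ℝ) : ℂ) * ((f x - f (sigma' α x)) / ((⟪α, x⟫ : ℝ) : ℂ))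

/-- The iterated Dunkl operator `T^β = T_1^{β_1} ∘ ⋯ ∘ T_N^{β_N}`. -/
def TDopM (R : Finset (V N)) (k : V N → ℝ) (β : Fin N → ℕ) (f : V N → ℂ) : V N → ℂ :=
  (Finset.univ : Finset (Fin N)).toList.foldr (fun j g => (TDop R k j)^[β j] g) f

/-- The Dunkl transform `𝓕f(ξ) = c_k^{-1} ∫ f(x) conj(𝐄(ξ,x)) dw(x)`,
for a given Dunkl kernel `Ek (ξ,x) ↦ E(iξ,x)`. -/
def dunklF (R : Finset (V N)) (k : V N → ℝ) (Ek : V N → V N → ℂ) (f : V N → ℂ) (ξ : V N) : ℂ :=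
  ((ck R k : ℝ) : ℂ)⁻¹ * ∫ x, f x * (starRingEnd ℂ) (Ek ξ x) ∂(dw R k)

/-- The Dunkl translation `f(x,y) = τ_x f(−y) = c_k^{-1} ∫ 𝐄(ξ,x) conj(𝐄(ξ,y)) 𝓕f(ξ) dw(ξ)`. -/
def dtrans (R : Finset (V N)) (k : V N → ℝ) (Ek : V N → V N → ℂ) (f : V N → ℂ) (x y : V N) : ℂ :=
  ((ck R k : ℝ) : ℂ)⁻¹ * ∫ ξ, Ek ξ x * (starRingEnd ℂ) (Ek ξ y) * dunklF R k Ek f ξ ∂(dw R k)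

/-- The generalized heat kernel `h_t(x,y) = c_k^{-1} ∫ e^{−t‖ξ‖²} 𝐄(ξ,x) conj(𝐄(ξ,y)) dw(ξ)`. -/
def heat (R : Finset (V N)) (k : V N → ℝ) (Ek : V N → V N → ℂ) (t : ℝ) (x y : V N) : ℂ :=
  ((ck R k : ℝ) : ℂ)⁻¹ *
    ∫ ξ, ((Real.exp (-t * ‖ξ‖ ^ 2) : ℝ) : ℂ) * Ek ξ x * (starRingEnd ℂ) (Ek ξ y) ∂(dw R k)

/-- `𝓕^{-1}f(x,y) := c_k^{-1} ∫ f(ξ) 𝐄(ξ,x) conj(𝐄(ξ,y)) dw(ξ)`. -/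
def Finv (R : Finset (V N)) (k : V N → ℝ) (Ek : V N → V N → ℂ) (f : V N → ℂ) (x y : V N) : ℂ :=
  ((ck R k : ℝ) : ℂ)⁻¹ * ∫ ξ, f ξ * Ek ξ x * (starRingEnd ℂ) (Ek ξ y) ∂(dw R k)

/-- For a finite sequence `𝛂 = (α₁,…,α_m)`, the composition `σ_𝛂 = σ_{α_m}∘⋯∘σ_{α₁}`. -/
def sigmaL (l : List (V N)) (y : V N) : V N := l.foldl (fun z α => sigma' α z) y

/-- `ρ_𝛂(x,y,t) = ∏_{i=0}^{m−1} (1 + ‖x − σ_{α_i}∘⋯∘σ_{α₁}(y)‖/√t)^{−2}`. -/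
def rho : List (V N) → V N → V N → ℝ → ℝ
  | [], _, _, _ => 1
  | α :: l, x, y, t => ((1 + ‖x - y‖ / Real.sqrt t) ^ 2)⁻¹ * rho l x (sigma' α y) t

/-- `𝛂` is admissible for `(x,y)`: `d(x, σ_𝛂(y)) = ‖x − σ_𝛂(y)‖`. -/
def IsAdmissible (R : Finset (V N)) (l : List (V N)) (x y : V N) : Prop :=
  dG R x (sigmaL l y) = ‖x - sigmaL l y‖

/-- `Λ(x,y,t) = Σ_{𝛂 ∈ 𝒜(x,y), ℓ(𝛂) ≤ |G|} ρ_𝛂(x,y,t)`. -/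
def Lam (R : Finset (V N)) (x y : V N) (t : ℝ) : ℝ :=
  ∑' l : {l : List (V N) // (∀ a ∈ l, a ∈ R) ∧ l.length ≤ Nat.card (Gset R) ∧
      IsAdmissible R l x y},
    rho (l : List (V N)) x y t

lemma aux_dir0 (R : Finset (V N)) (h0 : (0 : V N) ∉ R) (x : V N) :
    ∃ u : V N, ‖u‖ ≤ 1 / 2 ∧ ∀ α ∈ R, 0 ≤ ⟪x, α⟫ * ⟪u, α⟫ ∧ ⟪u, α⟫ ≠ (0 : ℝ) := by
  obtain ⟨v, hv⟩ := Module.Dual.exists_forall_ne_zero_of_forall_exists (K := ℝ)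
    (fun α : R => (innerₗ (V N) (α : V N))) (by
      intro α
      refine ⟨α, ?_⟩
      simp only [innerₗ_apply_apply]
      intro h
      rw [inner_self_eq_zero] at h
      exact h0 (h ▸ α.2))
  have hev : ∀ᶠ t : ℝ in nhdsWithin 0 (Set.Ioi 0), ∀ α ∈ R,
      0 ≤ ⟪x, α⟫ * ⟪x + t • v, α⟫ ∧ ⟪x + t • v, α⟫ ≠ (0 : ℝ) := by
    rw [Filter.eventually_all_finset]
    intro α hα
    have hvα : ⟪v, α⟫ ≠ (0 : ℝ) := by
      have := hv ⟨α, hα⟩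
      simp only [innerₗ_apply_apply] at this
      rwa [real_inner_comm] at this
    by_cases hx : ⟪x, α⟫ = (0 : ℝ)
    · filter_upwards [self_mem_nhdsWithin] with t ht
      have ht : 0 < t := ht
      rw [inner_add_left, inner_smul_left, hx]
      simp [ht.ne', hvα]
    · have hc : Continuous fun t : ℝ => (⟪x, α⟫ * ⟪x + t • v, α⟫ : ℝ) := by fun_prop
      have hpos : (0 : ℝ) < (fun t : ℝ => (⟪x, α⟫ * ⟪x + t • v, α⟫ : ℝ)) 0 := by
        simp only [zero_smul, add_zero]
        exact mul_self_pos.2 hx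
      have := (hc.tendsto 0).eventually_const_lt hpos
      filter_upwards [this.filter_mono nhdsWithin_le_nhds] with t ht
      refine ⟨ht.le, ?_⟩
      intro h
      simp [h] at ht
  obtain ⟨t, ht⟩ := hev.exists
  set u := x + t • v
  have hp : 0 < (2 * (‖u‖ + 1))⁻¹ := by positivity
  refine ⟨(2 * (‖u‖ + 1))⁻¹ • u, ?_, ?_⟩
  · rw [norm_smul, Real.norm_of_nonneg hp.le, inv_mul_le_iff₀ (by positivity)]
    linarith
  · intro α hα
    obtain ⟨h1, h2⟩ := ht α hα
    rw [inner_smul_left]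
    refine ⟨?_, mul_ne_zero (by simpa using (by positivity : (‖u‖ + 1) ≠ 0)) h2⟩
    have : (⟪x, α⟫ * ((starRingEnd ℝ) (2 * (‖u‖ + 1))⁻¹ * ⟪u, α⟫) : ℝ)
        = (2 * (‖u‖ + 1))⁻¹ * (⟪x, α⟫ * ⟪u, α⟫) := by
      simp only [conj_trivial]; ring
    rw [this]
    exact mul_nonneg hp.le h1

lemma aux_dir (R : Finset (V N)) (h0 : (0 : V N) ∉ R) :
    ∃ c : ℝ, 0 < c ∧ ∀ x : V N, ∃ u : V N, ‖u‖ ≤ 1 / 2 ∧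
      ∀ α ∈ R, 0 ≤ ⟪x, α⟫ * ⟪u, α⟫ ∧ c ≤ |⟪u, α⟫| := by
  have hev : ∀ᶠ c : ℝ in nhdsWithin 0 (Set.Ioi 0), ∀ p : R → SignType,
      ∀ x : V N, (∀ α : R, SignType.sign ⟪x, (α : V N)⟫ = p α) → ∃ u : V N, ‖u‖ ≤ 1 / 2 ∧
      ∀ α ∈ R, 0 ≤ ⟪x, α⟫ * ⟪u, α⟫ ∧ c ≤ |⟪u, α⟫| := by
    rw [Filter.eventually_all]
    intro p
    by_cases hp : ∃ x : V N, ∀ α : R, SignType.sign ⟪x, (α : V N)⟫ = p α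
    · obtain ⟨x₀, hx₀⟩ := hp
      obtain ⟨u, hu, hu2⟩ := aux_dir0 R h0 x₀
      have : ∀ᶠ c : ℝ in nhdsWithin 0 (Set.Ioi 0), ∀ α ∈ R, c ≤ |⟪u, α⟫| := by
        rw [Filter.eventually_all_finset]
        intro α hα
        exact (eventually_le_nhds (abs_pos.2 (hu2 α hα).2)).filter_mono nhdsWithin_le_nhds
      filter_upwards [this] with c hc x hx
      refine ⟨u, hu, fun α hα => ⟨?_, hc α hα⟩⟩
      have h1 := (hu2 α hα).1
      have h2 : SignType.sign (⟪x, α⟫ : ℝ) = SignType.sign ⟪x₀, α⟫ :=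
        (hx ⟨α, hα⟩).trans (hx₀ ⟨α, hα⟩).symm
      rcases lt_trichotomy (⟪x₀, α⟫ : ℝ) 0 with h | h | h
      · rw [sign_neg h, sign_eq_neg_one_iff] at h2
        exact mul_nonneg_of_nonpos_of_nonpos h2.le (by nlinarith)
      · rw [h, sign_zero, sign_eq_zero_iff] at h2
        simp [h2]
      · rw [sign_pos h, sign_eq_one_iff] at h2
        exact mul_nonneg h2.le (by nlinarith)
    · push Not at hp
      filter_upwards with c x hx
      obtain ⟨α, hα⟩ := hp x
      exact absurd (hx α) hα
  obtain ⟨c, hc, hc0⟩ := (hev.and self_mem_nhdsWithin).exists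
  exact ⟨c, hc0, fun x => hc _ x fun α => rfl⟩

lemma aux_wcont (R : Finset (V N)) (k : V N → ℝ) (hk : ∀ α ∈ R, 0 < k α) :
    Continuous (wfun R k) := by
  unfold wfun
  refine continuous_finsetProd _ fun α hα => ?_
  exact (by fun_prop : Continuous fun x : V N => |(⟪x, α⟫ : ℝ)|).rpow_const
    fun x => Or.inr (hk α hα).le

lemma aux_lf (R : Finset (V N)) (k : V N → ℝ) (hk : ∀ α ∈ R, 0 < k α) :
    IsLocallyFiniteMeasure (dw R k) :=
  IsLocallyFiniteMeasure.withDensity_ofReal (aux_wcont R k hk)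

lemma aux_dbl (R : Finset (V N)) (k : V N → ℝ) (hR : IsNRS R) (hk : ∀ α ∈ R, 0 < k α) :
    ∃ K : ℝ, 0 < K ∧ ∀ x : V N, 0 < wB R k x 1 ∧ ∀ s : ℝ, 0 < s → s ≤ 1 →
      s ^ (NN R k) * wB R k x 1 ≤ K * wB R k x s := by
  obtain ⟨c, hc, hu⟩ := aux_dir R hR.ne_zero
  haveI := aux_lf R k hk
  have hsq : ∀ α ∈ R, ‖α‖ ≤ 2 := by
    intro α hα
    have := hR.normSq α hα
    nlinarith [norm_nonneg α]
  set ρ : ℝ := min (1 / 2) (c / 4) with hρ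
  have hρ0 : 0 < ρ := by positivity
  have hρ1 : ρ ≤ 1 / 2 := min_le_left _ _
  have hρ2 : ρ ≤ c / 4 := min_le_right _ _
  set c' : ℝ := min 1 (c / 2) with hc'
  have hc0 : 0 < c' := by positivity
  have hc1 : c' ≤ 1 := min_le_left _ _
  have hc2 : c' ≤ c / 2 := min_le_right _ _
  set vol : ℝ → ℝ := fun r => (volume (closedBall (0 : V N) r)).toReal with hvol
  have hfin : ∀ r, volume (closedBall (0 : V N) r) ≠ ⊤ := fun r => measure_closedBall_lt_top.ne
  have hvpos : ∀ r, 0 < r → 0 < vol r := fun r hr =>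
    ENNReal.toReal_pos (measure_closedBall_pos _ _ hr).ne' (hfin r)
  set P : V N → ℝ := fun x => ∏ α ∈ R, (|(⟪x, α⟫ : ℝ)| + 1) ^ k α with hP
  have hPpos : ∀ x, 0 < P x := fun x => Finset.prod_pos fun α _ => by positivity
  set A : ℝ := ∏ α ∈ R, c' ^ k α with hA
  have hApos : 0 < A := Finset.prod_pos fun α _ => by positivity
  set B : ℝ := ∏ α ∈ R, (2 : ℝ) ^ k α with hB
  have hBpos : 0 < B := Finset.prod_pos fun α _ => by positivity
  -- lower bound
  have hlow : ∀ x : V N, ∀ s : ℝ, 0 < s → s ≤ 1 →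
      s ^ (NN R k) * (A * vol ρ * P x) ≤ wB R k x s := by
    intro x s hs hs1
    obtain ⟨u, hu1, hu2⟩ := hu x
    have hsub : closedBall (x + s • u) (s * ρ) ⊆ closedBall x s := by
      apply closedBall_subset_closedBall'
      rw [dist_eq_norm, add_sub_cancel_left, norm_smul, Real.norm_of_nonneg hs.le]
      nlinarith
    have hw : ∀ z ∈ closedBall (x + s • u) (s * ρ),
        s ^ (∑ α ∈ R, k α) * (A * P x) ≤ wfun R k z := by
      intro z hz
      rw [hA, hP, ← Finset.prod_mul_distrib, Real.rpow_sum_of_pos hs, ← Finset.prod_mul_distrib]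
      refine Finset.prod_le_prod (fun α _ => by positivity) fun α hα => ?_
      rw [← Real.mul_rpow hc0.le (by positivity), ← Real.mul_rpow hs.le (by positivity)]
      refine Real.rpow_le_rpow (by positivity) ?_ (hk α hα).le
      obtain ⟨h1, h2⟩ := hu2 α hα
      rw [mem_closedBall, dist_eq_norm] at hz
      have e : (⟪z, α⟫ : ℝ) = ⟪x, α⟫ + s * ⟪u, α⟫ + ⟪z - (x + s • u), α⟫ := by
        simp only [inner_sub_left, inner_add_left, inner_smul_left, conj_trivial]; ring
      have h3 : |(⟪z - (x + s • u), α⟫ : ℝ)| ≤ s * ρ * 2 :=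
        (abs_real_inner_le_norm _ _).trans
          (mul_le_mul hz (hsq α hα) (norm_nonneg _) (by positivity))
      have h4 : |(⟪x, α⟫ + s * ⟪u, α⟫ : ℝ)| = |(⟪x, α⟫ : ℝ)| + s * |(⟪u, α⟫ : ℝ)| := by
        rw [← abs_of_pos hs, ← abs_mul, abs_of_pos hs]
        apply abs_add_eq_add_abs_iff _ _ |>.2
        rcases mul_nonneg_iff.1 h1 with h | h
        · exact Or.inl ⟨h.1, mul_nonneg hs.le h.2⟩
        · exact Or.inr ⟨h.1, mul_nonpos_of_nonneg_of_nonpos hs.le h.2⟩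
      have h5 : |(⟪x, α⟫ : ℝ)| + s * |(⟪u, α⟫ : ℝ)| - s * ρ * 2 ≤ |(⟪z, α⟫ : ℝ)| := by
        rw [e, ← h4]
        have := abs_sub_abs_le_abs_add (⟪x, α⟫ + s * ⟪u, α⟫ : ℝ) ⟪z - (x + s • u), α⟫
        linarith
      refine le_trans ?_ h5
      have a0 := abs_nonneg (⟪x, α⟫ : ℝ)
      have h6 : s * c' * |(⟪x, α⟫ : ℝ)| ≤ 1 * |(⟪x, α⟫ : ℝ)| :=
        mul_le_mul_of_nonneg_right (mul_le_one₀ hs1 hc0.le hc1) a0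
      have h7 : s * c' ≤ s * (c / 2) := by gcongr
      have h8 : s * c ≤ s * |(⟪u, α⟫ : ℝ)| := by gcongr
      have h9 : s * ρ ≤ s * (c / 4) := by gcongr
      nlinarith
    have key : ENNReal.ofReal (s ^ (NN R k) * (A * vol ρ * P x)) ≤ dw R k (closedBall x s) := by
      calc ENNReal.ofReal (s ^ (NN R k) * (A * vol ρ * P x))
          = ENNReal.ofReal (s ^ (∑ α ∈ R, k α) * (A * P x)) *
              volume (closedBall (x + s • u) (s * ρ)) := by
            rw [Measure.addHaar_closedBall_mul _ _ hs.le hρ0.le, finrank_euclideanSpace_fin,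
              ← ENNReal.ofReal_toReal (hfin ρ), ← ENNReal.ofReal_mul (by positivity),
              ← ENNReal.ofReal_mul (by have := hPpos x; positivity)]
            congr 1
            rw [NN, Real.rpow_add hs, Real.rpow_natCast]
            ring
        _ = ∫⁻ _ in closedBall (x + s • u) (s * ρ),
              ENNReal.ofReal (s ^ (∑ α ∈ R, k α) * (A * P x)) := by
            rw [setLIntegral_const]
        _ ≤ ∫⁻ z in closedBall (x + s • u) (s * ρ), ENNReal.ofReal (wfun R k z) :=
            setLIntegral_mono' measurableSet_closedBall
              fun z hz => ENNReal.ofReal_le_ofReal (hw z hz)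
        _ = dw R k (closedBall (x + s • u) (s * ρ)) := by
            rw [dw, withDensity_apply _ measurableSet_closedBall]
        _ ≤ _ := measure_mono hsub
    exact (ENNReal.ofReal_le_iff_le_toReal measure_closedBall_lt_top.ne).1 key
  have hup : ∀ x : V N, wB R k x 1 ≤ B * vol 1 * P x := by
    intro x
    have hw : ∀ z ∈ closedBall x 1, wfun R k z ≤ B * P x := by
      intro z hz
      rw [hB, hP, ← Finset.prod_mul_distrib]
      refine Finset.prod_le_prod (fun α _ => by positivity) fun α hα => ?_
      rw [← Real.mul_rpow (by norm_num) (by positivity)]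
      refine Real.rpow_le_rpow (by positivity) ?_ (hk α hα).le
      rw [mem_closedBall, dist_eq_norm] at hz
      have e : (⟪z, α⟫ : ℝ) = ⟪x, α⟫ + ⟪z - x, α⟫ := by
        simp only [inner_sub_left]; ring
      have h3 : |(⟪z - x, α⟫ : ℝ)| ≤ 1 * 2 :=
        (abs_real_inner_le_norm _ _).trans
          (mul_le_mul hz (hsq α hα) (norm_nonneg _) (by positivity))
      rw [e]
      have := abs_add_le (⟪x, α⟫ : ℝ) ⟪z - x, α⟫
      have a0 := abs_nonneg (⟪x, α⟫ : ℝ)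
      linarith
    have key : dw R k (closedBall x 1) ≤ ENNReal.ofReal (B * vol 1 * P x) := by
      calc dw R k (closedBall x 1) = ∫⁻ z in closedBall x 1, ENNReal.ofReal (wfun R k z) := by
            rw [dw, withDensity_apply _ measurableSet_closedBall]
        _ ≤ ∫⁻ _ in closedBall x 1, ENNReal.ofReal (B * P x) :=
            setLIntegral_mono' measurableSet_closedBall
              fun z hz => ENNReal.ofReal_le_ofReal (hw z hz)
        _ = _ := by
            rw [setLIntegral_const, Measure.addHaar_closedBall_center,
              ← ENNReal.ofReal_toReal (hfin 1),
              ← ENNReal.ofReal_mul (by have := hPpos x; positivity)]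
            congr 1
            ring
    exact ENNReal.toReal_le_of_le_ofReal (by have := hPpos x; have := hvpos 1 one_pos; positivity)
      key
  have hv1 := hvpos 1 one_pos
  have hvr := hvpos ρ hρ0
  refine ⟨(B * vol 1) / (A * vol ρ), by positivity, fun x => ⟨?_, fun s hs hs1 => ?_⟩⟩
  · have := hlow x 1 one_pos le_rfl
    have h2 := hPpos x
    rw [Real.one_rpow] at this
    exact lt_of_lt_of_le (by positivity) this
  · have h1 := hlow x s hs hs1
    have h2 := hup x
    have h3 : 0 < s ^ NN R k := by positivity
    calc s ^ NN R k * wB R k x 1 ≤ s ^ NN R k * (B * vol 1 * P x) := by gcongr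
      _ = (B * vol 1) / (A * vol ρ) * (s ^ NN R k * (A * vol ρ * P x)) := by
        field_simp
      _ ≤ _ := by gcongr

lemma aux_pt (a : ℝ) (ha : 0 ≤ a) (r : ℝ) (hr : 0 ≤ r) :
    ∃ j : ℕ, r ≤ 2 ^ j ∧ (1 + r) ^ (-a) ≤ (2 : ℝ) ^ a * ((2 : ℝ) ^ j) ^ (-a) := by
  classical
  have hex : ∃ j : ℕ, r ≤ 2 ^ j := by
    obtain ⟨j, hj⟩ := pow_unbounded_of_one_lt r (one_lt_two (α := ℝ))
    exact ⟨j, hj.le⟩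
  refine ⟨Nat.find hex, Nat.find_spec hex, ?_⟩
  have h : (2 : ℝ) ^ (Nat.find hex) ≤ 2 * (1 + r) := by
    rcases hj : Nat.find hex with _ | j
    · norm_num; linarith
    · have := Nat.find_min hex (m := j) (by omega)
      push Not at this
      rw [pow_succ]
      linarith
  rw [Real.rpow_neg (by positivity), Real.rpow_neg (by positivity), ← div_eq_mul_inv,
    le_div_iff₀ (by positivity), inv_mul_le_iff₀ (by positivity),
    ← Real.mul_rpow (by positivity) (by positivity)]
  exact Real.rpow_le_rpow (by positivity) (by linarith) ha

lemma aux_wt (R : Finset (V N)) (k : V N → ℝ) (hR : IsNRS R) (hk : ∀ α ∈ R, 0 < k α)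
    (Ek : V N → V N → ℂ) (hEc : ∀ x : V N, Continuous fun ξ => Ek ξ x)
    (δ : ℝ) (hδ : 0 < δ) (C_E : ℝ) (hCE : 0 < C_E)
    (hE2 : ∀ t : ℝ, 0 < t → ∀ y : V N,
      (∫ ξ in closedBall (0 : V N) (1 / t), ‖Ek ξ y‖ ^ 2 ∂(dw R k)) ≤ C_E / wB R k y t) :
    ∃ D : ℝ, 0 < D ∧ ∀ x : V N, 0 < wB R k x 1 ∧
      Integrable (fun ξ => ‖Ek ξ x‖ ^ 2 * (1 + ‖ξ‖) ^ (-(NN R k + δ))) (dw R k) ∧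
      ∫ ξ, ‖Ek ξ x‖ ^ 2 * (1 + ‖ξ‖) ^ (-(NN R k + δ)) ∂(dw R k) ≤ D / wB R k x 1 := by
  obtain ⟨K, hK, hdbl⟩ := aux_dbl R k hR hk
  have := aux_lf R k hk
  have hNN : 0 ≤ NN R k := by
    unfold NN
    have : 0 ≤ ∑ α ∈ R, k α := Finset.sum_nonneg fun α hα => (hk α hα).le
    positivity
  set a := NN R k + δ with ha
  have ha0 : 0 ≤ a := by positivity
  set q : ℝ := (2 : ℝ) ^ (-δ) with hq
  have hq0 : 0 < q := by positivity
  have hq1 : q < 1 := Real.rpow_lt_one_of_one_lt_of_neg one_lt_two (by linarith)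
  have hsum : Summable fun j : ℕ => q ^ j := summable_geometric_of_lt_one hq0.le hq1
  set M : ℝ := (2 : ℝ) ^ a * C_E * K with hM
  have hM0 : 0 < M := by positivity
  have hS0 : 0 < ∑' j : ℕ, q ^ j := by
    rw [tsum_geometric_of_lt_one hq0.le hq1]
    exact inv_pos.2 (by linarith)
  refine ⟨M * ∑' j : ℕ, q ^ j, by positivity, fun x => ?_⟩
  obtain ⟨hw1, hd⟩ := hdbl x
  refine ⟨hw1, ?_⟩
  have hEx := hEc x
  have hcontw : Continuous fun ξ : V N => (1 + ‖ξ‖) ^ (-a) :=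
    (by fun_prop : Continuous fun ξ : V N => 1 + ‖ξ‖).rpow_const
      fun ξ => Or.inl (by positivity)
  have hcont : Continuous fun ξ => ‖Ek ξ x‖ ^ 2 * (1 + ‖ξ‖) ^ (-a) := by fun_prop
  have hpiece : ∀ j : ℕ, ∫⁻ ξ in closedBall (0 : V N) (2 ^ j), ENNReal.ofReal (‖Ek ξ x‖ ^ 2)
      ∂(dw R k) ≤ ENNReal.ofReal (C_E * K * ((2 : ℝ) ^ j) ^ (NN R k) / wB R k x 1) := by
    intro j
    have hint : IntegrableOn (fun ξ => ‖Ek ξ x‖ ^ 2) (closedBall (0 : V N) (2 ^ j)) (dw R k) :=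
      (by fun_prop : Continuous fun ξ => ‖Ek ξ x‖ ^ 2).continuousOn.integrableOn_compact
        (isCompact_closedBall _ _)
    rw [← ofReal_integral_eq_lintegral_ofReal hint (Filter.Eventually.of_forall fun ξ => by positivity)]
    apply ENNReal.ofReal_le_ofReal
    have hs : (0 : ℝ) < (2 ^ j)⁻¹ := by positivity
    have hs1 : ((2 : ℝ) ^ j)⁻¹ ≤ 1 := inv_le_one_of_one_le₀ (one_le_pow₀ one_le_two)
    have h1 := hE2 _ hs x
    have h2 := hd _ hs hs1
    rw [one_div, inv_inv] at h1
    refine h1.trans ?_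
    rw [Real.inv_rpow (by positivity)] at h2
    have hp : (0 : ℝ) < ((2 : ℝ) ^ j) ^ NN R k := by positivity
    have hws : 0 < wB R k x ((2 ^ j)⁻¹) := by
      have : 0 < K * wB R k x ((2 ^ j)⁻¹) := lt_of_lt_of_le (by positivity) h2
      exact (pos_iff_pos_of_mul_pos this).1 hK
    rw [div_le_div_iff₀ hws hw1]
    rw [inv_mul_le_iff₀ hp] at h2
    calc C_E * wB R k x 1 ≤ C_E * (((2 : ℝ) ^ j) ^ NN R k * (K * wB R k x ((2 ^ j)⁻¹))) := by
          gcongr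
      _ = _ := by ring
  have hlin : ∫⁻ ξ, ENNReal.ofReal (‖Ek ξ x‖ ^ 2 * (1 + ‖ξ‖) ^ (-a)) ∂(dw R k) ≤
      ENNReal.ofReal ((M * ∑' j : ℕ, q ^ j) / wB R k x 1) := by
    calc ∫⁻ ξ, ENNReal.ofReal (‖Ek ξ x‖ ^ 2 * (1 + ‖ξ‖) ^ (-a)) ∂(dw R k)
        ≤ ∫⁻ ξ, ∑' j : ℕ, (closedBall (0 : V N) (2 ^ j)).indicator
            (fun ξ => ENNReal.ofReal ((2 : ℝ) ^ a * ((2 : ℝ) ^ j) ^ (-a)) *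
              ENNReal.ofReal (‖Ek ξ x‖ ^ 2)) ξ ∂(dw R k) := by
          refine lintegral_mono fun ξ => ?_
          obtain ⟨j, hj1, hj2⟩ := aux_pt a ha0 ‖ξ‖ (norm_nonneg _)
          refine le_trans ?_ (ENNReal.le_tsum j)
          rw [Set.indicator_of_mem (by simpa using hj1), ← ENNReal.ofReal_mul (by positivity)]
          apply ENNReal.ofReal_le_ofReal
          rw [mul_comm]
          gcongr
      _ = ∑' j : ℕ, ENNReal.ofReal ((2 : ℝ) ^ a * ((2 : ℝ) ^ j) ^ (-a)) *
            ∫⁻ ξ in closedBall (0 : V N) (2 ^ j), ENNReal.ofReal (‖Ek ξ x‖ ^ 2) ∂(dw R k) := by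
          have hm : Measurable fun ξ => ENNReal.ofReal (‖Ek ξ x‖ ^ 2) :=
            (ENNReal.continuous_ofReal.comp (by fun_prop : Continuous fun ξ => ‖Ek ξ x‖ ^ 2)).measurable
          rw [lintegral_tsum fun j =>
            ((hm.const_mul _).indicator measurableSet_closedBall).aemeasurable]
          congr 1
          ext j
          rw [lintegral_indicator measurableSet_closedBall, lintegral_const_mul _ hm]
      _ ≤ ∑' j : ℕ, ENNReal.ofReal (M / wB R k x 1 * q ^ j) := by
          refine ENNReal.tsum_le_tsum fun j => ?_
          refine (mul_le_mul_right (hpiece j) _).trans ?_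
          rw [← ENNReal.ofReal_mul (by positivity)]
          apply ENNReal.ofReal_le_ofReal
          apply le_of_eq
          have e : ((2 : ℝ) ^ j) ^ (-a) * ((2 : ℝ) ^ j) ^ NN R k = q ^ j := by
            rw [← Real.rpow_add (by positivity), hq, ← Real.rpow_natCast, ← Real.rpow_natCast,
              ← Real.rpow_mul (by norm_num), ← Real.rpow_mul (by norm_num)]
            congr 1
            rw [ha]; ring
          rw [← e, hM]
          ring
      _ = _ := by
          rw [← ENNReal.ofReal_tsum_of_nonneg (fun j => by positivity) (hsum.mul_left _),
            tsum_mul_left]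
          congr 1
          ring
  have hnn : 0 ≤ᵐ[dw R k] fun ξ => ‖Ek ξ x‖ ^ 2 * (1 + ‖ξ‖) ^ (-a) :=
    Filter.Eventually.of_forall fun ξ => by positivity
  have hint : Integrable (fun ξ => ‖Ek ξ x‖ ^ 2 * (1 + ‖ξ‖) ^ (-a)) (dw R k) := by
    refine ⟨hcont.aestronglyMeasurable, ?_⟩
    rw [hasFiniteIntegral_iff_ofReal hnn]
    exact lt_of_le_of_lt hlin ENNReal.ofReal_lt_top
  refine ⟨hint, ?_⟩
  rw [← ofReal_integral_eq_lintegral_ofReal hint hnn] at hlin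
  exact (ENNReal.ofReal_le_ofReal_iff (by positivity)).1 hlin

lemma aux_pdM0 (f : V N → ℂ) : pdM (fun _ => 0) f = f := by
  unfold pdM
  generalize (Finset.univ : Finset (Fin N)).toList = l
  induction l with
  | nil => rfl
  | cons a l ih => simpa using ih

/-- the basic bound `|(f∗g)(x,y)| ≤ C₁ w(B(x,1))^{−1/2} w(B(y,1))^{−1/2}‖f‖₁`. -/
theorem statement7 (N : ℕ) (R : Finset (V N)) (k : V N → ℝ)
    (hR : IsNRS R) (hk : ∀ α ∈ R, 0 < k α)
    (hkG : ∀ α ∈ R, ∀ β ∈ R, k (sigma' α β) = k β)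
    (Ek : V N → V N → ℂ)
    (hEsm : ∀ x : V N, ContDiff ℝ (⊤ : ℕ∞) fun ξ => Ek ξ x)
    (hEb : ∀ (x : V N) (β : Fin N → ℕ) (ξ : V N),
      ‖pdM β (fun ξ' => Ek ξ' x) ξ‖ ≤ ‖x‖ ^ (∑ j, β j))
    (hEconj : ∀ ξ x : V N, Ek (-ξ) x = (starRingEnd ℂ) (Ek ξ x))
    (δ : ℝ) (hδ : 0 < δ)
    (C_E : ℝ) (hCE : 0 < C_E)
    (hE2 : ∀ t : ℝ, 0 < t → ∀ y : V N,
      (∫ ξ in closedBall (0 : V N) (1 / t), ‖Ek ξ y‖ ^ 2 ∂(dw R k)) ≤ C_E / wB R k y t) :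
    ∃ C₁ > (0 : ℝ), ∀ f g : V N → ℂ, Integrable f (dw R k) → Integrable g (dw R k) →
      (∀ ξ : V N, ‖dunklF R k Ek g ξ‖ ≤ (1 + ‖ξ‖) ^ (-(NN R k + δ))) →
      ∀ x y : V N,
        ‖((ck R k : ℝ) : ℂ)⁻¹ * ∫ ξ, Ek ξ x * (starRingEnd ℂ) (Ek ξ y) *
            dunklF R k Ek f ξ * dunklF R k Ek g ξ ∂(dw R k)‖ ≤
          C₁ * wB R k x 1 ^ (-(1 / 2 : ℝ)) * wB R k y 1 ^ (-(1 / 2 : ℝ)) *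
            ∫ z, ‖f z‖ ∂(dw R k) := by
  have hEc : ∀ x : V N, Continuous fun ξ => Ek ξ x := fun x => (hEsm x).continuous
  have hE1 : ∀ ξ x : V N, ‖Ek ξ x‖ ≤ 1 := by
    intro ξ x
    have := hEb x (fun _ => 0) ξ
    rw [aux_pdM0] at this
    simpa using this
  obtain ⟨D, hD, hwt⟩ := aux_wt R k hR hk Ek hEc δ hδ C_E hCE hE2
  set c : ℝ := |ck R k|⁻¹ with hc
  have hc0 : 0 ≤ c := by positivity
  refine ⟨c * c * D + 1, by positivity, fun f g hf hg hgb x y => ?_⟩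
  set F : ℝ := ∫ z, ‖f z‖ ∂(dw R k) with hF
  have hF0 : 0 ≤ F := integral_nonneg fun z => norm_nonneg _
  have hFf : ∀ ξ, ‖dunklF R k Ek f ξ‖ ≤ c * F := by
    intro ξ
    unfold dunklF
    rw [norm_mul, norm_inv, Complex.norm_real, Real.norm_eq_abs]
    refine mul_le_mul_of_nonneg_left ?_ hc0
    refine norm_integral_le_of_norm_le hf.norm (Filter.Eventually.of_forall fun z => ?_)
    rw [norm_mul, RCLike.norm_conj]
    exact mul_le_of_le_one_right (norm_nonneg _) (hE1 _ _)
  obtain ⟨hx0, hxi, hxb⟩ := hwt x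
  obtain ⟨hy0, hyi, hyb⟩ := hwt y
  set a : ℝ := NN R k + δ
  set p : ℝ := wB R k x 1 ^ (-(1 / 2 : ℝ)) with hp
  set r : ℝ := wB R k y 1 ^ (-(1 / 2 : ℝ)) with hr
  have hp0 : 0 < p := by positivity
  have hr0 : 0 < r := by positivity
  have hpp : p * p = (wB R k x 1)⁻¹ := by
    rw [hp, ← Real.rpow_add hx0, ← Real.rpow_neg_one]; norm_num
  have hrr : r * r = (wB R k y 1)⁻¹ := by
    rw [hr, ← Real.rpow_add hy0, ← Real.rpow_neg_one]; norm_num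
  rw [div_eq_mul_inv, ← hpp] at hxb
  rw [div_eq_mul_inv, ← hrr] at hyb
  have hbd : ‖∫ ξ, Ek ξ x * (starRingEnd ℂ) (Ek ξ y) *
            dunklF R k Ek f ξ * dunklF R k Ek g ξ ∂(dw R k)‖ ≤
      ∫ ξ, c * F * (r / p / 2 * (‖Ek ξ x‖ ^ 2 * (1 + ‖ξ‖) ^ (-a)) +
        p / r / 2 * (‖Ek ξ y‖ ^ 2 * (1 + ‖ξ‖) ^ (-a))) ∂(dw R k) := by
    refine norm_integral_le_of_norm_le
      (((hxi.const_mul _).add (hyi.const_mul _)).const_mul _)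
      (Filter.Eventually.of_forall fun ξ => ?_)
    rw [norm_mul, norm_mul, norm_mul, RCLike.norm_conj]
    have h1 : ‖Ek ξ x‖ * ‖Ek ξ y‖ ≤ r / p / 2 * ‖Ek ξ x‖ ^ 2 + p / r / 2 * ‖Ek ξ y‖ ^ 2 := by
      have e : r / p / 2 * ‖Ek ξ x‖ ^ 2 + p / r / 2 * ‖Ek ξ y‖ ^ 2 - ‖Ek ξ x‖ * ‖Ek ξ y‖ =
          (r * ‖Ek ξ x‖ - p * ‖Ek ξ y‖) ^ 2 / (2 * p * r) := by
        field_simp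
        ring
      have : 0 ≤ (r * ‖Ek ξ x‖ - p * ‖Ek ξ y‖) ^ 2 / (2 * p * r) := by positivity
      linarith
    calc ‖Ek ξ x‖ * ‖Ek ξ y‖ * ‖dunklF R k Ek f ξ‖ * ‖dunklF R k Ek g ξ‖
        ≤ (r / p / 2 * ‖Ek ξ x‖ ^ 2 + p / r / 2 * ‖Ek ξ y‖ ^ 2) * (c * F) *
          (1 + ‖ξ‖) ^ (-a) := by
          gcongr
          · exact hFf ξ
          · exact hgb ξ
      _ = _ := by ring
  rw [integral_const_mul, integral_add (hxi.const_mul _) (hyi.const_mul _),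
    integral_const_mul, integral_const_mul] at hbd
  have h2 : ‖∫ ξ, Ek ξ x * (starRingEnd ℂ) (Ek ξ y) *
            dunklF R k Ek f ξ * dunklF R k Ek g ξ ∂(dw R k)‖ ≤ c * F * (D * p * r) := by
    refine hbd.trans (mul_le_mul_of_nonneg_left ?_ (by positivity))
    calc _ ≤ r / p / 2 * (D * (p * p)) + p / r / 2 * (D * (r * r)) := by gcongr
      _ = _ := by field_simp; ring
  rw [norm_mul, norm_inv, Complex.norm_real, Real.norm_eq_abs]
  calc _ ≤ c * (c * F * (D * p * r)) := mul_le_mul_of_nonneg_left h2 hc0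
    _ = (c * c * D) * p * r * F := by ring
    _ ≤ (c * c * D + 1) * p * r * F := by gcongr; linarith
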